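/- arXiv:1207.4642 — 2 statements merged into one kernel-verified Lean document; each statement's English description precedes it below -/
import Mathlib

section
/- Let u ∈ L¹[0,1] be not essentially bounded (u ∉ L^∞[0,1]). Then for every sequence (u_k) of piecewise constant functions on [0,1] converging to u in L¹[0,1], the number of jumps J(u_k) tends to infinity as k → ∞. -/
open MeasureTheory Filter Set
open scoped ENNReal Classical

noncomputable section

/-- The Lebesgue measure restricted to `[0,1]`. -/
def mu01 : Measure ℝ := volume.restrict (Set.Icc (0:ℝ) 1)

/-- The step function determined by partition points `x` and values `a`. -/
def stepF {m : ℕ} (x : Fin (m + 1) → ℝ) (a : Fin m → ℝ) : ℝ → ℝ := fun t =>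
  ∑ l : Fin m, Set.indicator (Set.Ioo (x l.castSucc) (x l.succ)) (fun _ => a l) t

/-- `u` is a.e. on `[0,1]` represented by the step function with partition `x` and values `a`. -/
def IsPCRep (u : ℝ → ℝ) {m : ℕ} (x : Fin (m + 1) → ℝ) (a : Fin m → ℝ) : Prop :=
  StrictMono x ∧ x 0 = 0 ∧ x (Fin.last m) = 1 ∧ ∀ᵐ t ∂mu01, u t = stepF x a t

/-- `u` is piecewise constant on `[0,1]` (up to a.e. equality). -/
def IsPC (u : ℝ → ℝ) : Prop :=
  ∃ (m : ℕ) (x : Fin (m + 1) → ℝ) (a : Fin m → ℝ), IsPCRep u x a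

/-- The number of jumps `J(u)`: the minimal number of interior partition points over all
piecewise constant representations of `u`. -/
def jumps (u : ℝ → ℝ) : ℕ :=
  sInf {jj : ℕ | ∃ (x : Fin (jj + 2) → ℝ) (a : Fin (jj + 1) → ℝ), IsPCRep u x a}

/-- `u` is piecewise constant with all jump locations inside `S`. -/
def IsPCIn (u : ℝ → ℝ) (S : Set ℝ) : Prop :=
  ∃ (m : ℕ) (x : Fin (m + 1) → ℝ) (a : Fin m → ℝ), IsPCRep u x a ∧
    ∀ i : Fin (m + 1), i ≠ 0 → i ≠ Fin.last m → x i ∈ S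

/-- The `L¹[0,1]` distance of two functions. -/
def L1dist (u v : ℝ → ℝ) : ℝ := ∫ t, |u t - v t| ∂mu01

/-- The continuous `L¹`-Potts functional `P_γ` with data `f`. -/
def Potts (γ : ℝ) (f u : ℝ → ℝ) : ℝ≥0∞ :=
  if IsPC u then ENNReal.ofReal (γ * (jumps u : ℝ) + L1dist u f) else ⊤

/-- The (semi-)discrete `L¹`-Potts functional with data `f`, restricted to piecewise
constant functions whose jumps lie in `S`. -/
def PottsIn (γ : ℝ) (f : ℝ → ℝ) (S : Set ℝ) (u : ℝ → ℝ) : ℝ≥0∞ :=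
  if IsPCIn u S then ENNReal.ofReal (γ * (jumps u : ℝ) + L1dist u f) else ⊤

/-!
The number of essential values is lower semicontinuous under convergence in measure: if `u` has
`n` distinct essential values, then a function with fewer than `n` values misses one of them by a
fixed distance, and hence stays away from `u` on one of `n` sets of positive measure that depend
only on `u`. A function that is not essentially bounded has infinitely many essential values,
whereas a function with `J` jumps takes at most `J + 1` values up to a null set.
-/

section Pigeonhole

variable {E : Type*} [PseudoEMetricSpace E] {S V : Finset E}

theorem exists_mem_forall_half_einfsep_le_edist (h : V.card < S.card) :
    ∃ y ∈ S, ∀ b ∈ V, (S : Set E).einfsep / 2 ≤ edist b y := by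
  by_contra! hnear
  choose! b hbV hb using hnear
  obtain ⟨y, hy, z, hz, hyz, hb_eq⟩ := Finset.exists_ne_map_eq_of_card_lt_of_maps_to h hbV
  have hlt : edist y z < (S : Set E).einfsep :=
    calc edist y z ≤ edist (b y) y + edist (b y) z := edist_triangle_left _ _ _
      _ < (S : Set E).einfsep / 2 + (S : Set E).einfsep / 2 :=
        ENNReal.add_lt_add (hb y hy) (hb_eq ▸ hb z hz)
      _ = (S : Set E).einfsep := ENNReal.add_halves _
  exact hlt.not_ge (einfsep_le_edist_of_mem hy hz hyz)

theorem exists_mem_forall_quarter_einfsep_le_edist (h : V.card < S.card) :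
    ∃ y ∈ S, ∀ b ∈ V, ∀ z ∈ Metric.eball y ((S : Set E).einfsep / 2 / 2),
      (S : Set E).einfsep / 2 / 2 ≤ edist b z := by
  obtain ⟨y, hy, hfar⟩ := exists_mem_forall_half_einfsep_le_edist h
  refine ⟨y, hy, fun b hb z hz => not_lt.1 fun hbz => (hfar b hb).not_gt ?_⟩
  calc edist b y ≤ edist b z + edist z y := edist_triangle _ _ _
    _ < (S : Set E).einfsep / 2 / 2 + (S : Set E).einfsep / 2 / 2 := ENNReal.add_lt_add hbz hz
    _ = (S : Set E).einfsep / 2 := ENNReal.add_halves _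

end Pigeonhole

section EssRange

variable {α E : Type*} [MeasurableSpace α] {μ : Measure α}

/-- The essential range of `u`: the points all of whose neighbourhoods have a non-null preimage
under `u`. Phrased through cluster points, it needs no measurability of `u`. -/
def essRange [TopologicalSpace E] (μ : Measure α) (u : α → E) : Set E :=
  {y | MapClusterPt y (ae μ) u}

theorem measure_preimage_ne_zero_of_mem_essRange [TopologicalSpace E] {u : α → E} {y : E}
    (hy : y ∈ essRange μ u) {s : Set E} (hs : s ∈ nhds y) : μ (u ⁻¹' s) ≠ 0 :=
  frequently_ae_mem_iff.1 (MapClusterPt.frequently hy hs)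

theorem ae_mem_essRange [TopologicalSpace E] [HereditarilyLindelofSpace E] (u : α → E) :
    ∀ᵐ t ∂μ, u t ∈ essRange μ u := by
  suffices (essRange μ u)ᶜᶜ ∈ map u (ae μ) by rwa [compl_compl] at this
  refine (HereditarilyLindelofSpace.isLindelof _).compl_mem_sets_of_nhdsWithin fun y hy => ?_
  obtain ⟨s, hs, hnull⟩ : ∃ s ∈ nhds y, ∀ᵐ t ∂μ, u t ∉ s := by
    simpa [essRange, mapClusterPt_iff_frequently] using hy
  exact ⟨s, mem_nhdsWithin_of_mem_nhds hs, hnull⟩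

theorem essRange_infinite_of_not_ae_norm_le [SeminormedAddCommGroup E]
    [HereditarilyLindelofSpace E] {u : α → E} (hu : ¬ ∃ c : ℝ, ∀ᵐ t ∂μ, ‖u t‖ ≤ c) :
    (essRange μ u).Infinite := by
  intro hfin
  obtain ⟨c, hc⟩ := hfin.isBounded.exists_norm_le
  exact hu ⟨c, (ae_mem_essRange u).mono fun t ht => hc _ ht⟩

end EssRange

section ConvergenceInMeasure

variable {α E ι : Type*} [MeasurableSpace α] {μ : Measure α} {l : Filter ι} {f : ι → α → E}
  {u : α → E}

theorem eventually_card_le_of_tendstoInMeasure [EMetricSpace E] (hf : TendstoInMeasure μ f l u)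
    {S : Finset E} (hS : ↑S ⊆ essRange μ u) :
    ∀ᶠ i in l, ∀ V : Finset E, (∀ᵐ t ∂μ, f i t ∈ V) → S.card ≤ V.card := by
  set ε := (S : Set E).einfsep / 2 / 2
  have hε : 0 < ε := ENNReal.half_pos (ENNReal.half_pos S.finite_toSet.einfsep_pos.ne').ne'
  have hsmall : ∀ᶠ i in l, ∀ y ∈ S,
      μ {t | ε ≤ edist (f i t) (u t)} < μ (u ⁻¹' Metric.eball y ε) :=
    (Finset.eventually_all S).2 fun y hy => (hf ε hε).eventually_lt_const <| pos_iff_ne_zero.2 <|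
      measure_preimage_ne_zero_of_mem_essRange (hS hy) (Metric.eball_mem_nhds y hε)
  filter_upwards [hsmall] with i hi V hV
  by_contra! hcard
  obtain ⟨y, hy, hfar⟩ := exists_mem_forall_quarter_einfsep_le_edist hcard
  refine (hi y hy).not_ge (measure_mono_ae ?_)
  filter_upwards [hV] with t ht hut using hfar _ ht _ hut

theorem tendsto_card_atTop_of_tendstoInMeasure [EMetricSpace E] (hf : TendstoInMeasure μ f l u)
    (hu : (essRange μ u).Infinite) {V : ι → Finset E} (hV : ∀ i, ∀ᵐ t ∂μ, f i t ∈ V i) :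
    Tendsto (fun i => (V i).card) l atTop := by
  refine tendsto_atTop.2 fun n => ?_
  obtain ⟨S, hS, rfl⟩ := hu.exists_subset_card_eq n
  exact (eventually_card_le_of_tendstoInMeasure hf hS).mono fun i hi => hi _ (hV i)

theorem tendstoInMeasure_of_tendsto_integral_norm_sub [NormedAddCommGroup E]
    (hf : ∀ i, Integrable (f i) μ) (hu : Integrable u μ)
    (hfu : Tendsto (fun i => ∫ t, ‖f i t - u t‖ ∂μ) l (nhds 0)) : TendstoInMeasure μ f l u := by
  refine tendstoInMeasure_of_tendsto_eLpNorm one_ne_zero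
    (fun i => (hf i).aestronglyMeasurable) hu.aestronglyMeasurable ?_
  have heLpNorm (i : ι) :
      eLpNorm (f i - u) 1 μ = ENNReal.ofReal (∫ t, ‖f i t - u t‖ ∂μ) := by
    rw [eLpNorm_one_eq_lintegral_enorm]
    exact (ofReal_integral_norm_eq_lintegral_enorm ((hf i).sub hu)).symm
  simpa only [heLpNorm, ENNReal.ofReal_zero] using ENNReal.tendsto_ofReal hfu

end ConvergenceInMeasure

section StepFunction

theorem sum_indicator_const_mem_insert_zero_image {α ι M : Type*} [Fintype ι] [AddCommMonoid M]
    [DecidableEq M] {s : ι → Set α} (hs : Pairwise (Function.onFun Disjoint s)) (a : ι → M)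
    (t : α) : ∑ i, (s i).indicator (fun _ => a i) t ∈ insert 0 (Finset.univ.image a) := by
  by_cases h : ∃ i, t ∈ s i
  · obtain ⟨i, hi⟩ := h
    have hsum : ∑ j, (s j).indicator (fun _ => a j) t = a i := by
      rw [Fintype.sum_eq_single i fun j hj =>
        indicator_of_notMem ((hs hj).notMem_of_mem_right hi) _, indicator_of_mem hi]
    exact hsum ▸ Finset.mem_insert_of_mem (Finset.mem_image_of_mem a (Finset.mem_univ i))
  · push Not at h
    rw [Finset.sum_eq_zero fun i _ => indicator_of_notMem (h i) _]
    exact Finset.mem_insert_self _ _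

theorem pairwise_disjoint_Ioo_castSucc_succ {β : Type*} [Preorder β] {m : ℕ}
    {x : Fin (m + 1) → β} (hx : Monotone x) :
    Pairwise (Function.onFun Disjoint fun l : Fin m => Ioo (x l.castSucc) (x l.succ)) := by
  intro i j hij
  simpa only [Function.onFun, Fin.orderSucc_castSucc] using
    hx.pairwise_disjoint_on_Ioo_succ ((Fin.castSucc_injective m).ne hij)

theorem stepF_mem_insert_zero_image {m : ℕ} {x : Fin (m + 1) → ℝ} (hx : Monotone x)
    (a : Fin m → ℝ) (t : ℝ) : stepF x a t ∈ insert 0 (Finset.univ.image a) :=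
  sum_indicator_const_mem_insert_zero_image (pairwise_disjoint_Ioo_castSucc_succ hx) a t

instance : IsFiniteMeasure mu01 :=
  inferInstanceAs (IsFiniteMeasure (volume.restrict (Icc (0 : ℝ) 1)))

theorem integrable_stepF {m : ℕ} (x : Fin (m + 1) → ℝ) (a : Fin m → ℝ) :
    Integrable (stepF x a) mu01 :=
  integrable_finsetSum _ fun _ _ => (integrable_const _).indicator measurableSet_Ioo

end StepFunction

namespace IsPC

variable {u : ℝ → ℝ}

theorem integrable (hu : IsPC u) : Integrable u mu01 := by
  obtain ⟨m, x, a, -, -, -, hrep⟩ := hu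
  exact (integrable_stepF x a).congr (EventuallyEq.symm hrep)

theorem exists_isPCRep_jumps (hu : IsPC u) :
    ∃ (x : Fin (jumps u + 2) → ℝ) (a : Fin (jumps u + 1) → ℝ), IsPCRep u x a := by
  obtain ⟨_ | n, x, a, hrep⟩ := hu
  · exact absurd (hrep.2.1.symm.trans hrep.2.2.1) zero_ne_one
  · exact Nat.sInf_mem (s := {j | ∃ (x : Fin (j + 2) → ℝ) (a : Fin (j + 1) → ℝ), IsPCRep u x a})
      ⟨n, x, a, hrep⟩

-- One more than the number of pieces, as `stepF` also takes the value `0` at partition points.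
theorem exists_finset_card_le_jumps_add_two (hu : IsPC u) :
    ∃ V : Finset ℝ, V.card ≤ jumps u + 2 ∧ ∀ᵐ t ∂mu01, u t ∈ V := by
  obtain ⟨x, a, hx, -, -, hrep⟩ := hu.exists_isPCRep_jumps
  refine ⟨insert 0 (Finset.univ.image a), ?_, ?_⟩
  · have himage : (Finset.univ.image a).card ≤ jumps u + 1 :=
      Finset.card_image_le.trans_eq (Finset.card_fin _)
    exact (Finset.card_insert_le _ _).trans (Nat.succ_le_succ himage)
  · filter_upwards [hrep] with t ht
    exact ht ▸ stepF_mem_insert_zero_image hx.monotone a t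

end IsPC

theorem statement_7_general
    (u : ℝ → ℝ) (hu : IntegrableOn u (Icc 0 1)) (hinf : (essRange mu01 u).Infinite)
    (useq : ℕ → ℝ → ℝ) (huseq : ∀ k, IsPC (useq k))
    (hconv : Tendsto (fun k => L1dist (useq k) u) atTop (nhds 0)) :
    Tendsto (fun k => jumps (useq k)) atTop atTop := by
  have hmeas : TendstoInMeasure mu01 useq atTop u :=
    tendstoInMeasure_of_tendsto_integral_norm_sub (fun k => (huseq k).integrable) hu hconv
  choose V hcard hV using fun k => (huseq k).exists_finset_card_le_jumps_add_two
  have hcard_atTop : Tendsto (fun k => (V k).card) atTop atTop :=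
    tendsto_card_atTop_of_tendstoInMeasure hmeas hinf hV
  exact (tendsto_atTop_mono hcard hcard_atTop).atTop_of_add_const 2

theorem statement_7
    (u : ℝ → ℝ) (hu : IntegrableOn u (Set.Icc 0 1))
    -- `u` is not essentially bounded on `[0,1]`
    (hunb : ¬ ∃ c : ℝ, ∀ᵐ t ∂mu01, |u t| ≤ c)
    (useq : ℕ → ℝ → ℝ) (huseq : ∀ k, IsPC (useq k))
    (hconv : Tendsto (fun k => L1dist (useq k) u) atTop (nhds 0)) :
    Tendsto (fun k => jumps (useq k)) atTop atTop :=
  statement_7_general u hu (essRange_infinite_of_not_ae_norm_le hunb) useq huseq hconv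
end
end

section
/- In the deconvolution setting with data f = K*g and κ ≤ l_min/6: let u_1 ∈ PC[0,1] have no jump in ∪_i N_i, and assume 6·h_max·κ ≤ (1/2)·h_min·(l_min − 2κ) − γ. Then there exists u_2 ∈ PC[0,1] with P_γ(u_2) ≤ P_γ(u_1) such that u_2 has at least one jump in each interval J_i, i = 1,...,n. -/
open MeasureTheory Filter Set
open scoped ENNReal Classical

noncomputable section

/-- Convolution `(K*g)(t) = ∫ K(s)·g(t−s) ds`. -/
def convK (K g : ℝ → ℝ) : ℝ → ℝ := fun t => ∫ s, K s * g (t - s)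

/-- The piecewise constant function on `ℝ` with jump locations `j` and values `α`
(extended constantly outside the jump region): at `t`, its value is `α i` where `i`
is the number of jump locations strictly below `t`. -/
def stepOn {n : ℕ} (j : Fin n → ℝ) (α : Fin (n + 1) → ℝ) : ℝ → ℝ := fun t =>
  α ⟨(Finset.univ.filter fun i => j i < t).card,
      Nat.lt_succ_of_le ((Finset.card_filter_le _ _).trans (by simp))⟩

/-- The jump locations together with the endpoints `0` and `1`. -/
def jext {n : ℕ} (j : Fin (n + 1) → ℝ) : Fin (n + 3) → ℝ :=
  Fin.cons (0 : ℝ) (Fin.snoc j (1 : ℝ))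

/-- The minimal length `l_min` of the intervals of constancy (inside `[0,1]`). -/
def lmin {n : ℕ} (j : Fin (n + 1) → ℝ) : ℝ :=
  Finset.univ.inf' Finset.univ_nonempty
    fun i : Fin (n + 2) => jext j i.succ - jext j i.castSucc

/-- The minimal jump height `h_min`. -/
def hjumpMin {n : ℕ} (α : Fin (n + 2) → ℝ) : ℝ :=
  Finset.univ.inf' Finset.univ_nonempty fun i : Fin (n + 1) => |α i.succ - α i.castSucc|

/-- The maximal jump height `h_max`. -/
def hjumpMax {n : ℕ} (α : Fin (n + 2) → ℝ) : ℝ :=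
  Finset.univ.sup' Finset.univ_nonempty fun i : Fin (n + 1) => |α i.succ - α i.castSucc|

/-- The (real-valued) `L¹`-Potts value `γ·J(u) + ‖u − f‖₁` for piecewise constant `u`. -/
def PottsVal (γ : ℝ) (f u : ℝ → ℝ) : ℝ := γ * (jumps u : ℝ) + L1dist u f

/-!
The competitor `u₂` is built window by window, the window of `j k` being `(j k - ρ, j k + ρ)` with
`ρ = lmin j / 2`: `u₁` is kept between its first and its last jump in the window and replaced by the
two plateaus of `K * g` outside; if `u₁` has no jump in the window, a jump is placed at `j k`.

Let `c` and `c'` be the values of `u₁` at the two ends of the window, `β` and `β'` those of `g`. Off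
`[j k - κ, j k + κ]`, where `K * g` is constant, the `L¹` error drops by
`(|c - β| + |c' - β'|) (ρ - κ)`, and on `[j k - κ, j k + κ]` it grows by at most
`(|c - β| + |c' - β'|) 2κ`; since `3κ ≤ ρ`, moving the plateaus never costs anything. Where `u₁` is
constant on the window, `|c - β| + |c' - β'| ≥ |β' - β|` while the growth is at most
`|β' - β| 2κ`, so the error drops by at least `|β' - β| (ρ - 3κ) ≥ γ`, which pays for the new jump.
-/

open scoped Topology

section LocallyAEConstant

variable {X β : Type*} [TopologicalSpace X] [MeasurableSpace X] {μ : Measure X}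

theorem eventually_nhds_inf_ae_iff {t : X} {p : X → Prop} :
    (∀ᶠ s in 𝓝 t ⊓ ae μ, p s) ↔ ∃ U, IsOpen U ∧ t ∈ U ∧ ∀ᵐ s ∂μ, s ∈ U → p s := by
  rw [eventually_inf]
  constructor
  · rintro ⟨V, hV, A, hA, h⟩
    obtain ⟨U, hUV, hU, htU⟩ := mem_nhds_iff.1 hV
    exact ⟨U, hU, htU, mem_of_superset hA fun s hsA hsU => h s ⟨hUV hsU, hsA⟩⟩
  · rintro ⟨U, hU, htU, h⟩
    exact ⟨U, hU.mem_nhds htU, _, h, fun s hs => hs.2 hs.1⟩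

theorem neBot_nhds_inf_ae [μ.IsOpenPosMeasure] (t : X) : (𝓝 t ⊓ ae μ).NeBot := by
  refine Filter.inf_neBot_iff.2 fun U hU A hA => ?_
  rw [inter_comm]
  exact (Measure.dense_of_ae hA).inter_nhds_nonempty hU

theorem ae_of_forall_eventually_nhds_inf_ae [SecondCountableTopology X] {S : Set X}
    {p : X → Prop} (h : ∀ t ∈ S, ∀ᶠ s in 𝓝 t ⊓ ae μ, p s) : ∀ᵐ s ∂μ, s ∈ S → p s := by
  refine measure_null_of_locally_null _ fun t ht => ?_
  obtain ⟨htS, -⟩ := Classical.not_imp.1 ht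
  obtain ⟨U, hU, htU, hp⟩ := eventually_nhds_inf_ae_iff.1 (h t htS)
  refine ⟨_, inter_mem_nhdsWithin _ (hU.mem_nhds htU), measure_mono_null ?_ hp⟩
  exact fun s hs hUp => hs.1 fun _ => hUp hs.2

theorem exists_ae_eq_const_of_eventuallyConst [SecondCountableTopology X] [μ.IsOpenPosMeasure]
    {S : Set X} (hS : IsConnected S) {u : X → β}
    (h : ∀ t ∈ S, EventuallyConst u (𝓝 t ⊓ ae μ)) : ∃ c, ∀ᵐ s ∂μ, s ∈ S → u s = c := by
  obtain ⟨r, hr⟩ := hS.nonempty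
  have : Nonempty β := ⟨u r⟩
  simp only [eventuallyConst_iff_exists_eventuallyEq] at h
  choose! c hc using h
  have hlocal : ∀ t ∈ S, ∀ᶠ s in 𝓝[S] t, c t = c s := by
    intro t ht
    obtain ⟨U, hU, htU, hUc⟩ := eventually_nhds_inf_ae_iff.1 (hc t ht)
    filter_upwards [self_mem_nhdsWithin, mem_nhdsWithin_of_mem_nhds (hU.mem_nhds htU)]
      with s hsS hsU
    have := neBot_nhds_inf_ae (μ := μ) s
    have hcs : ∀ᶠ r in 𝓝 s ⊓ ae μ, u r = c t :=
      eventually_nhds_inf_ae_iff.2 ⟨U, hU, hsU, hUc⟩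
    obtain ⟨r, hrt, hrs⟩ := (hcs.and (hc s hsS)).exists
    exact hrt.symm.trans hrs
  have hconst : ∀ t ∈ S, c t = c r := fun t ht =>
    hS.isPreconnected.induction₂ (fun x y => c x = c y) hlocal
      (fun _ _ _ _ _ _ => Eq.trans) (fun _ _ _ _ => Eq.symm) ht hr
  exact ⟨c r, ae_of_forall_eventually_nhds_inf_ae fun t ht => hconst t ht ▸ hc t ht⟩

end LocallyAEConstant

section JumpSet

variable {u : ℝ → ℝ} {a b c t : ℝ}

/-- The essential jump set of `u`: the points of `(0,1)` in no neighbourhood of which `u` agrees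
a.e. with a constant. It depends on `u` only up to a.e. equality, so that it locates the jumps
independently of any partition representing `u`. -/
def jumpSet (u : ℝ → ℝ) : Set ℝ :=
  {t | t ∈ Ioo (0 : ℝ) 1 ∧ ¬ EventuallyConst u (𝓝 t ⊓ ae volume)}

theorem eventuallyConst_of_ae_Ioo (ht : t ∈ Ioo a b) (h : ∀ᵐ s, s ∈ Ioo a b → u s = c) :
    EventuallyConst u (𝓝 t ⊓ ae volume) :=
  eventuallyConst_iff_exists_eventuallyEq.2
    ⟨c, eventually_nhds_inf_ae_iff.2 ⟨Ioo a b, isOpen_Ioo, ht, h⟩⟩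

theorem eventuallyConst_of_notMem_jumpSet (ht : t ∈ Ioo (0 : ℝ) 1) (h : t ∉ jumpSet u) :
    EventuallyConst u (𝓝 t ⊓ ae volume) := by
  by_contra hu
  exact h ⟨ht, hu⟩

theorem exists_ae_eq_const_of_disjoint_jumpSet (hab : a < b) (h01 : Ioo a b ⊆ Ioo 0 1)
    (h : Disjoint (Ioo a b) (jumpSet u)) : ∃ c, ∀ᵐ s, s ∈ Ioo a b → u s = c :=
  exists_ae_eq_const_of_eventuallyConst (isConnected_Ioo hab) fun _ ht =>
    eventuallyConst_of_notMem_jumpSet (h01 ht) (disjoint_left.1 h ht)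

theorem exists_mem_jumpSet_of_ne {p q d d' β β' : ℝ} (hpd : p < d) (hdd' : d ≤ d') (hd'q : d' < q)
    (h01 : Ioo p q ⊆ Ioo 0 1) (hβ : ∀ᵐ t, t ∈ Ioo p d → u t = β)
    (hβ' : ∀ᵐ t, t ∈ Ioo d' q → u t = β') (hne : β ≠ β') : ∃ t ∈ jumpSet u, t ∈ Icc d d' := by
  by_contra! hno
  have hdisj : Disjoint (Ioo p q) (jumpSet u) := by
    refine disjoint_left.2 fun t ht hu => hu.2 ?_
    rcases lt_or_ge t d with hd | hd
    · exact eventuallyConst_of_ae_Ioo ⟨ht.1, hd⟩ hβ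
    · exact eventuallyConst_of_ae_Ioo ⟨not_le.1 fun hd' => hno t hu ⟨hd, hd'⟩, ht.2⟩ hβ'
  obtain ⟨c, hc⟩ := exists_ae_eq_const_of_disjoint_jumpSet (hpd.trans_le (hdd'.trans hd'q.le))
    h01 hdisj
  obtain ⟨s, ⟨hs, hsc⟩, hsI⟩ := (Measure.dense_of_ae (hβ.and hc)).exists_between hpd
  obtain ⟨r, ⟨hr, hrc⟩, hrI⟩ := (Measure.dense_of_ae (hβ'.and hc)).exists_between hd'q
  apply hne
  rw [← hs hsI, ← hr hrI, hsc ⟨hsI.1, hsI.2.trans_le (hdd'.trans hd'q.le)⟩,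
    hrc ⟨(hpd.trans_le hdd').trans hrI.1, hrI.2⟩]

end JumpSet

section Representation

theorem exists_mem_Ioo_castSucc_succ {α : Type*} [LinearOrder α] {m : ℕ} {x : Fin (m + 1) → α}
    {t : α} (h0 : x 0 < t) (h1 : t < x (Fin.last m)) (ht : t ∉ range x) :
    ∃ l : Fin m, t ∈ Ioo (x l.castSucc) (x l.succ) := by
  by_contra! h
  have hlt : ∀ i : Fin (m + 1), x i < t := by
    intro i
    induction i using Fin.induction with
    | zero => exact h0
    | succ i ih =>
      by_contra hi
      exact h i ⟨ih, lt_of_le_of_ne (not_lt.1 hi) fun e => ht ⟨_, e.symm⟩⟩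
  exact lt_asymm h1 (hlt _)

theorem notMem_range_of_mem_Ioo_castSucc_succ {α : Type*} [LinearOrder α] {m : ℕ}
    {x : Fin (m + 1) → α} (hx : StrictMono x) {t : α} {l : Fin m}
    (ht : t ∈ Ioo (x l.castSucc) (x l.succ)) : t ∉ range x := by
  rintro ⟨i, rfl⟩
  have h1 := hx.lt_iff_lt.1 ht.1
  have h2 := hx.lt_iff_lt.1 ht.2
  rw [Fin.lt_def] at h1 h2
  simp only [Fin.val_castSucc, Fin.val_succ] at h1 h2
  omega

theorem stepF_eq_of_mem_Ioo {m : ℕ} {x : Fin (m + 1) → ℝ} (hx : StrictMono x) (a : Fin m → ℝ)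
    {t : ℝ} {l : Fin m} (ht : t ∈ Ioo (x l.castSucc) (x l.succ)) : stepF x a t = a l := by
  unfold stepF
  rw [Finset.sum_eq_single_of_mem l (Finset.mem_univ l), indicator_of_mem ht]
  refine fun k _ hk => indicator_of_notMem (fun hk' => hk ?_) _
  have h1 := hx.lt_iff_lt.1 (hk'.1.trans ht.2)
  have h2 := hx.lt_iff_lt.1 (ht.1.trans hk'.2)
  rw [Fin.castSucc_lt_succ_iff] at h1 h2
  exact le_antisymm h1 h2

theorem ae_mu01_iff {p : ℝ → Prop} : (∀ᵐ t ∂mu01, p t) ↔ ∀ᵐ t, t ∈ Ioo (0 : ℝ) 1 → p t := by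
  rw [mu01, ← Measure.restrict_congr_set Ioo_ae_eq_Icc, ae_restrict_iff' measurableSet_Ioo]

variable {u : ℝ → ℝ}

theorem IsPCRep.ae_eq_on_Ioo {m : ℕ} {x : Fin (m + 1) → ℝ} {a : Fin m → ℝ} (h : IsPCRep u x a)
    (l : Fin m) : ∀ᵐ t, t ∈ Ioo (x l.castSucc) (x l.succ) → u t = a l := by
  obtain ⟨hx, hx0, hx1, hu⟩ := h
  filter_upwards [ae_mu01_iff.1 hu] with t ht htl
  rw [ht ⟨?_, ?_⟩, stepF_eq_of_mem_Ioo hx a htl]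
  · exact hx0 ▸ (hx.monotone (Fin.zero_le _)).trans_lt htl.1
  · exact hx1 ▸ htl.2.trans_le (hx.monotone (Fin.le_last _))

theorem IsPCRep.exists_of_mem_jumpSet {m : ℕ} {x : Fin (m + 1) → ℝ} {a : Fin m → ℝ}
    (h : IsPCRep u x a) {t : ℝ} (ht : t ∈ jumpSet u) : ∃ i, i ≠ 0 ∧ i ≠ Fin.last m ∧ x i = t := by
  have hrange : t ∈ range x := by
    by_contra hn
    obtain ⟨l, hl⟩ := exists_mem_Ioo_castSucc_succ (h.2.1 ▸ ht.1.1) (h.2.2.1 ▸ ht.1.2) hn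
    exact ht.2 (eventuallyConst_of_ae_Ioo hl (h.ae_eq_on_Ioo l))
  obtain ⟨i, rfl⟩ := hrange
  refine ⟨i, ?_, ?_, rfl⟩
  · rintro rfl
    exact ht.1.1.ne' h.2.1
  · rintro rfl
    exact ht.1.2.ne h.2.2.1

theorem IsPCRep.ncard_jumpSet_le {m : ℕ} {x : Fin (m + 2) → ℝ} {a : Fin (m + 1) → ℝ}
    (h : IsPCRep u x a) : (jumpSet u).ncard ≤ m := by
  have hsub : jumpSet u ⊆ ↑(({0, Fin.last (m + 1)}ᶜ : Finset (Fin (m + 2))).image x) := by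
    intro t ht
    obtain ⟨i, hi0, hi1, rfl⟩ := h.exists_of_mem_jumpSet ht
    exact Finset.mem_coe.2 (Finset.mem_image_of_mem x (by simp [hi0, hi1]))
  calc (jumpSet u).ncard ≤ (({0, Fin.last (m + 1)}ᶜ : Finset (Fin (m + 2))).image x).card :=
        ncard_coe_finset _ ▸ ncard_le_ncard hsub (Finset.finite_toSet _)
    _ ≤ ({0, Fin.last (m + 1)}ᶜ : Finset (Fin (m + 2))).card := Finset.card_image_le
    _ = m := by
        rw [Finset.card_compl, Finset.card_pair (Fin.last_pos).ne, Fintype.card_fin]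
        rfl

theorem IsPC.finite_jumpSet (h : IsPC u) : (jumpSet u).Finite := by
  obtain ⟨m, x, a, h⟩ := h
  refine (finite_range x).subset fun t ht => ?_
  obtain ⟨i, -, -, hi⟩ := h.exists_of_mem_jumpSet ht
  exact ⟨i, hi⟩

theorem exists_strictMono_range_eq_insert {α : Type*} [LinearOrder α] {a b : α} (hab : a < b)
    {D : Set α} (hD : D.Finite) (hDab : D ⊆ Ioo a b) :
    ∃ x : Fin (D.ncard + 2) → α, StrictMono x ∧ x 0 = a ∧ x (Fin.last (D.ncard + 1)) = b ∧
      range x = insert a (insert b D) := by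
  have hb : b ∉ D := fun h => lt_irrefl _ (hDab h).2
  have ha : a ∉ insert b D := fun h =>
    h.elim hab.ne fun h => lt_irrefl _ (hDab h).1
  have hbD : (insert b D).Finite := hD.insert b
  have habD : (insert a (insert b D)).Finite := hbD.insert a
  have hcard : habD.toFinset.card = D.ncard + 2 := by
    rw [← ncard_eq_toFinset_card _ habD, ncard_insert_of_notMem ha hbD,
      ncard_insert_of_notMem hb hD]
  have hIcc : insert a (insert b D) ⊆ Icc a b :=
    insert_subset (left_mem_Icc.2 hab.le)
      (insert_subset (right_mem_Icc.2 hab.le) (hDab.trans Ioo_subset_Icc_self))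
  let x := habD.toFinset.orderEmbOfFin hcard
  have hrange : range x = insert a (insert b D) := by
    rw [Finset.range_orderEmbOfFin, Finite.coe_toFinset]
  have hx : ∀ i, x i ∈ Icc a b := fun i => hIcc (hrange ▸ mem_range_self i)
  refine ⟨x, x.strictMono, ?_, ?_, hrange⟩
  · obtain ⟨i, hi⟩ : a ∈ range x := hrange ▸ mem_insert a _
    exact le_antisymm ((x.monotone (Fin.zero_le i)).trans_eq hi) (hx 0).1
  · obtain ⟨i, hi⟩ : b ∈ range x := hrange ▸ mem_insert_of_mem a (mem_insert b D)
    exact le_antisymm (hx _).2 (hi.symm.trans_le (x.monotone (Fin.le_last i)))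

theorem exists_isPCRep_of_jumpSet_subset_range {m : ℕ} {x : Fin (m + 1) → ℝ} (hx : StrictMono x)
    (hx0 : x 0 = 0) (hx1 : x (Fin.last m) = 1) (hu : jumpSet u ⊆ range x) :
    ∃ a, IsPCRep u x a := by
  have hgap : ∀ l : Fin m, ∃ c, ∀ᵐ s, s ∈ Ioo (x l.castSucc) (x l.succ) → u s = c := by
    refine fun l => exists_ae_eq_const_of_disjoint_jumpSet (hx Fin.castSucc_lt_succ) ?_ ?_
    · exact Ioo_subset_Ioo (hx0 ▸ hx.monotone (Fin.zero_le _)) (hx1 ▸ hx.monotone (Fin.le_last _))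
    · exact disjoint_left.2 fun t ht htu => notMem_range_of_mem_Ioo_castSucc_succ hx ht (hu htu)
  choose a ha using hgap
  refine ⟨a, hx, hx0, hx1, ae_mu01_iff.2 ?_⟩
  filter_upwards [eventually_countable_forall.2 ha, (finite_range x).countable.ae_notMem volume]
    with t ht hn hI
  obtain ⟨l, hl⟩ := exists_mem_Ioo_castSucc_succ (hx0.symm ▸ hI.1) (hx1.symm ▸ hI.2) hn
  rw [ht l hl, stepF_eq_of_mem_Ioo hx a hl]

theorem exists_isPCRep_jumpSet (h : (jumpSet u).Finite) :
    ∃ (x : Fin ((jumpSet u).ncard + 2) → ℝ) (a : Fin ((jumpSet u).ncard + 1) → ℝ),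
      IsPCRep u x a ∧ ∀ i, i ≠ 0 → i ≠ Fin.last _ → x i ∈ jumpSet u := by
  obtain ⟨x, hx, hx0, hx1, hrange⟩ :=
    exists_strictMono_range_eq_insert zero_lt_one h fun _ ht => ht.1
  obtain ⟨a, ha⟩ := exists_isPCRep_of_jumpSet_subset_range hx hx0 hx1
    (hrange ▸ (subset_insert _ _).trans (subset_insert _ _))
  refine ⟨x, a, ha, fun i hi0 hi1 => ?_⟩
  rcases hrange ▸ mem_range_self i with hi | hi | hi
  · exact absurd (hx.injective (hi.trans hx0.symm)) hi0
  · exact absurd (hx.injective (hi.trans hx1.symm)) hi1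
  · exact hi

theorem isPC_iff_finite_jumpSet : IsPC u ↔ (jumpSet u).Finite := by
  refine ⟨IsPC.finite_jumpSet, fun h => ?_⟩
  obtain ⟨x, a, ha, -⟩ := exists_isPCRep_jumpSet h
  exact ⟨_, x, a, ha⟩

theorem IsPC.jumps_eq_ncard_jumpSet (h : IsPC u) : jumps u = (jumpSet u).ncard := by
  obtain ⟨x, a, ha, -⟩ := exists_isPCRep_jumpSet h.finite_jumpSet
  refine le_antisymm (Nat.sInf_le ⟨x, a, ha⟩) (le_csInf ⟨_, x, a, ha⟩ ?_)
  rintro m ⟨y, b, hb⟩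
  exact hb.ncard_jumpSet_le

theorem IsPCRep.ne_of_mem_jumpSet {m : ℕ} {x : Fin (m + 2) → ℝ} {a : Fin (m + 1) → ℝ}
    (h : IsPCRep u x a) {i : Fin m} (hi : x i.succ.castSucc ∈ jumpSet u) :
    a i.castSucc ≠ a i.succ := by
  intro ha
  have hleft := h.ae_eq_on_Ioo i.castSucc
  rw [ha, Fin.succ_castSucc] at hleft
  refine hi.2 (eventuallyConst_of_ae_Ioo (a := x i.castSucc.castSucc) (b := x i.succ.succ)
    (c := a i.succ) ⟨h.1 (by simp [Fin.lt_def]), h.1 Fin.castSucc_lt_succ⟩ ?_)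
  filter_upwards [hleft, h.ae_eq_on_Ioo i.succ,
    (countable_singleton (x i.succ.castSucc)).ae_notMem volume] with t hl hr hne ht
  rcases lt_or_gt_of_ne hne with hlt | hgt
  · exact hl ⟨ht.1, hlt⟩
  · exact hr ⟨hgt, ht.2⟩

theorem IsPC.exists_reduced_rep (h : IsPC u) :
    ∃ (m : ℕ) (x : Fin (m + 2) → ℝ) (a : Fin (m + 1) → ℝ), IsPCRep u x a ∧
      (∀ i : Fin m, a i.castSucc ≠ a i.succ) ∧
      ∀ t ∈ jumpSet u, ∃ i, i ≠ 0 ∧ i ≠ Fin.last (m + 1) ∧ x i = t := by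
  obtain ⟨x, a, hrep, hx⟩ := exists_isPCRep_jumpSet h.finite_jumpSet
  refine ⟨_, x, a, hrep, fun i => hrep.ne_of_mem_jumpSet (hx _ ?_ ?_), fun t ht =>
    hrep.exists_of_mem_jumpSet ht⟩
  · simp [Fin.ext_iff]
  · exact (Fin.castSucc_lt_last _).ne

theorem IsPC.integrable_s14 (h : IsPC u) : Integrable u mu01 := by
  obtain ⟨m, x, a, h⟩ := h
  refine Integrable.congr ?_ (EventuallyEq.symm h.2.2.2)
  unfold stepF mu01
  exact integrable_finsetSum _ fun l _ => (integrable_const (a l)).indicator measurableSet_Ioo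

end Representation

section StepFunction

variable {n : ℕ} {d d' : Fin n → ℝ} {α : Fin (n + 1) → ℝ} {s t : ℝ}

theorem stepOn_congr (h : ∀ i, d i < s ↔ d' i < t) : stepOn d α s = stepOn d' α t := by
  simp only [stepOn, h]

theorem stepOn_eq {k : Fin (n + 1)} (h : ∀ i : Fin n, d i < t ↔ i.castSucc < k) :
    stepOn d α t = α k := by
  unfold stepOn
  congr 1
  ext
  simp only [h, Fin.lt_def, Fin.val_castSucc]
  rw [Fin.card_filter_val_lt]
  exact min_eq_right (Nat.lt_succ_iff.1 k.2)

theorem stepOn_eq_ite {k : Fin n} (hlo : ∀ i < k, d i < t) (hhi : ∀ i, k < i → t ≤ d i) :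
    stepOn d α t = if t ≤ d k then α k.castSucc else α k.succ := by
  split_ifs with hk
  · refine stepOn_eq fun i => ⟨fun hi => ?_, hlo i⟩
    by_contra h
    rcases (not_lt.1 h).eq_or_lt with h | h
    · exact hi.not_ge (Fin.castSucc_injective n h ▸ hk)
    · exact hi.not_ge (hhi i h)
  · refine stepOn_eq fun i => ?_
    rw [Fin.castSucc_lt_succ_iff]
    refine ⟨fun hi => not_lt.1 fun h => hi.not_ge (hhi i h), fun h => ?_⟩
    rcases h.eq_or_lt with rfl | h
    · exact not_le.1 hk
    · exact hlo i h

theorem measurable_stepOn (d : Fin n → ℝ) (α : Fin (n + 1) → ℝ) : Measurable (stepOn d α) := by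
  have hcard : Measurable fun t : ℝ => (Finset.univ.filter fun i => d i < t).card := by
    simp only [Finset.card_filter]
    exact Finset.measurable_fun_sum _ fun i _ =>
      Measurable.ite measurableSet_Ioi measurable_const measurable_const
  refine (measurable_from_top (f := α)).comp (measurable_to_countable' fun k => ?_)
  convert hcard (measurableSet_singleton k.val) using 1
  ext t
  simp [Fin.ext_iff]

end StepFunction

section Convolution

variable {K g : ℝ → ℝ} {t β h R : ℝ}

theorem abs_convK_sub_le (hKpos : ∀ x, 0 ≤ K x) (hKnorm : ∫ x, K x = 1)
    (hKsupp : Function.support K ⊆ Metric.ball 0 R) (hg : AEStronglyMeasurable g) (hh : 0 ≤ h)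
    (hgβ : ∀ r ∈ Ioo (t - R) (t + R), |g r - β| ≤ h) : |convK K g t - β| ≤ h := by
  rw [← Real.ball_eq_Ioo] at hgβ
  exact dist_convolution_le hh hKsupp hKpos hKnorm hg hgβ

theorem convK_eq (hKpos : ∀ x, 0 ≤ K x) (hKnorm : ∫ x, K x = 1)
    (hKsupp : Function.support K ⊆ Metric.ball 0 R) (hg : AEStronglyMeasurable g)
    (hgβ : ∀ r ∈ Ioo (t - R) (t + R), g r = β) : convK K g t = β := by
  refine sub_eq_zero.1 (abs_nonpos_iff.1 ?_)
  exact abs_convK_sub_le hKpos hKnorm hKsupp hg le_rfl fun r hr => by simp [hgβ r hr]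

theorem aestronglyMeasurable_convK (hK : AEStronglyMeasurable K) (hg : AEStronglyMeasurable g) :
    AEStronglyMeasurable (convK K g) :=
  (hK.convolution_integrand (ContinuousLinearMap.lsmul ℝ ℝ) hg).integral_prod_right'

theorem integrable_convK_stepOn {n : ℕ} (d : Fin n → ℝ) (α : Fin (n + 1) → ℝ)
    (hKpos : ∀ x, 0 ≤ K x) (hKnorm : ∫ x, K x = 1)
    (hKsupp : Function.support K ⊆ Metric.ball 0 R) :
    Integrable (convK K (stepOn d α)) mu01 := by
  have hg := (measurable_stepOn d α).aestronglyMeasurable (μ := volume)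
  have hK := (integrable_of_integral_eq_one hKnorm).aestronglyMeasurable
  have : IsFiniteMeasure mu01 := by unfold mu01; infer_instance
  refine Integrable.of_bound (aestronglyMeasurable_convK hK hg).restrict (∑ i, |α i|)
    (Eventually.of_forall fun t => ?_)
  rw [Real.norm_eq_abs, ← sub_zero (convK K (stepOn d α) t)]
  refine abs_convK_sub_le hKpos hKnorm hKsupp hg (by positivity) fun r _ => ?_
  rw [sub_zero]
  exact Finset.single_le_sum (f := fun i => |α i|) (fun i _ => abs_nonneg _) (Finset.mem_univ _)

end Convolution

section Separation

/-- The windows `(j i - ρ, j i + ρ)` lie in `[0,1]` and are pairwise disjoint, in the order of their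
indices. -/
structure IsSeparated {n : ℕ} (j : Fin n → ℝ) (ρ : ℝ) : Prop where
  add_le_sub : ∀ ⦃i k⦄, i < k → j i + ρ ≤ j k - ρ
  nonneg : ∀ k, 0 ≤ j k - ρ
  le_one : ∀ k, j k + ρ ≤ 1

theorem lmin_le_jext_sub {n : ℕ} {j : Fin (n + 1) → ℝ} (hl : 0 ≤ lmin j) {i k : Fin (n + 3)}
    (hik : i < k) : lmin j ≤ jext j k - jext j i := by
  have hstep : ∀ l : Fin (n + 2), lmin j ≤ jext j l.succ - jext j l.castSucc := fun l =>
    Finset.inf'_le _ (Finset.mem_univ l)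
  have hmono : Monotone (jext j) :=
    Fin.monotone_iff_le_succ.2 fun l => by linarith [hstep l]
  obtain ⟨l, rfl⟩ := Fin.exists_castSucc_eq.2 (hik.trans_le (Fin.le_last k)).ne
  linarith [hstep l, hmono (Fin.castSucc_lt_iff_succ_le.1 hik)]

theorem isSeparated_lmin_div_two {n : ℕ} {j : Fin (n + 1) → ℝ} (hl : 0 ≤ lmin j) :
    IsSeparated j (lmin j / 2) := by
  have hj : ∀ i, j i = jext j i.castSucc.succ := fun i => by simp [jext]
  have h0 : jext j 0 = 0 := rfl
  have h1 : jext j (Fin.last (n + 2)) = 1 := by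
    rw [← Fin.succ_last, jext, Fin.cons_succ, Fin.snoc_last]
  have hle := @lmin_le_jext_sub _ _ hl
  refine ⟨fun i k hik => ?_, fun k => ?_, fun k => ?_⟩
  · rw [hj i, hj k]
    linarith [hle (Fin.succ_lt_succ_iff.2 (Fin.castSucc_lt_castSucc_iff.2 hik))]
  · rw [hj k]
    linarith [hle (Fin.succ_pos k.castSucc)]
  · rw [hj k]
    linarith [hle ((Fin.succ_lt_succ_iff.2 (Fin.castSucc_lt_last k)).trans_eq (Fin.succ_last _))]

variable {n : ℕ} {j : Fin n → ℝ} {ρ : ℝ}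

theorem IsSeparated.Ioc_subset (hj : IsSeparated j ρ) (k : Fin n) :
    Ioc (j k - ρ) (j k + ρ) ⊆ Icc 0 1 := fun _ ht =>
  ⟨(hj.nonneg k).trans ht.1.le, ht.2.trans (hj.le_one k)⟩

theorem IsSeparated.Ioo_subset (hj : IsSeparated j ρ) (k : Fin n) :
    Ioo (j k - ρ) (j k + ρ) ⊆ Ioo 0 1 :=
  Ioo_subset_Ioo (hj.nonneg k) (hj.le_one k)

theorem IsSeparated.pairwise_disjoint (hj : IsSeparated j ρ) :
    Pairwise (Function.onFun Disjoint fun k => Ioc (j k - ρ) (j k + ρ)) := by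
  refine (pairwise_disjoint_on _).2 fun i k hik => disjoint_left.2 fun t hi hk => ?_
  linarith [hj.add_le_sub hik, hi.2, hk.1]

theorem IsSeparated.eq_of_mem (hj : IsSeparated j ρ) {i k : Fin n} {t : ℝ}
    (hi : t ∈ Ioo (j i - ρ) (j i + ρ)) (hk : t ∈ Ioo (j k - ρ) (j k + ρ)) : i = k :=
  hj.pairwise_disjoint.eq (not_disjoint_iff.2 ⟨t, Ioo_subset_Ioc_self hi, Ioo_subset_Ioc_self hk⟩)

end Separation

section Transition

/-- `f` passes from the plateau `β` to the plateau `β'` within `[s - κ, s + κ]`, and stays between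
them on the whole window `(s - ρ, s + ρ)`. -/
structure IsTransition (f : ℝ → ℝ) (s κ ρ β β' : ℝ) : Prop where
  eq_left : ∀ t ∈ Ioo (s - ρ) (s - κ), f t = β
  eq_right : ∀ t ∈ Ioo (s + κ) (s + ρ), f t = β'
  abs_sub_left_le : ∀ t ∈ Ioo (s - ρ) (s + ρ), |f t - β| ≤ |β' - β|
  abs_sub_right_le : ∀ t ∈ Ioo (s - ρ) (s + ρ), |f t - β'| ≤ |β' - β|

variable {n : ℕ} {j : Fin n → ℝ} {α : Fin (n + 1) → ℝ} {K : ℝ → ℝ} {κ ρ : ℝ}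

theorem support_subset_ball_of_lt (hKsupp : Function.support K ⊆ Icc (-κ) κ) {R : ℝ} (hR : κ < R) :
    Function.support K ⊆ Metric.ball 0 R := by
  rw [Real.ball_eq_Ioo, zero_sub, zero_add]
  exact hKsupp.trans (Icc_subset_Ioo (neg_lt_neg hR) hR)

theorem IsSeparated.stepOn_eq_of_mem_Ioo (hj : IsSeparated j ρ) (α : Fin (n + 1) → ℝ)
    {k : Fin n} {t : ℝ} (ht : t ∈ Ioo (j k - 2 * ρ) (j k + 2 * ρ)) :
    stepOn j α t = if t ≤ j k then α k.castSucc else α k.succ :=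
  stepOn_eq_ite (fun _ hi => by linarith [hj.add_le_sub hi, ht.1])
    fun _ hi => by linarith [hj.add_le_sub hi, ht.2]

theorem IsSeparated.isTransition_convK (hj : IsSeparated j ρ) (α : Fin (n + 1) → ℝ)
    (hκρ : κ < ρ) (hKpos : ∀ x, 0 ≤ K x) (hKnorm : ∫ x, K x = 1)
    (hKsupp : Function.support K ⊆ Icc (-κ) κ) (k : Fin n) :
    IsTransition (convK K (stepOn j α)) (j k) κ ρ (α k.castSucc) (α k.succ) := by
  have hg := (measurable_stepOn j α).aestronglyMeasurable (μ := volume)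
  have hval := fun {t} => hj.stepOn_eq_of_mem_Ioo α (k := k) (t := t)
  have hsupp := fun {R} => support_subset_ball_of_lt (R := R) hKsupp
  refine ⟨fun t ht => ?_, fun t ht => ?_, fun t ht => ?_, fun t ht => ?_⟩
  · refine convK_eq hKpos hKnorm (hsupp (R := j k - t) (by linarith [ht.2])) hg fun r hr => ?_
    rw [hval ⟨by linarith [hr.1, ht.1], by linarith [hr.1, hr.2, ht.1]⟩,
      if_pos (by linarith [hr.2])]
  · refine convK_eq hKpos hKnorm (hsupp (R := t - j k) (by linarith [ht.1])) hg fun r hr => ?_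
    rw [hval ⟨by linarith [hr.1, hr.2, ht.2], by linarith [hr.2, ht.2]⟩,
      if_neg (by linarith [hr.1])]
  · refine abs_convK_sub_le hKpos hKnorm (hsupp hκρ) hg (abs_nonneg _) fun r hr => ?_
    rw [hval ⟨by linarith [hr.1, ht.1], by linarith [hr.2, ht.2]⟩]
    split_ifs <;> simp
  · refine abs_convK_sub_le hKpos hKnorm (hsupp hκρ) hg (abs_nonneg _) fun r hr => ?_
    rw [hval ⟨by linarith [hr.1, ht.1], by linarith [hr.2, ht.2]⟩]
    split_ifs <;> simp [abs_sub_comm]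

theorem convK_stepOn_eq_stepOn (hκρ : κ < ρ) (hKpos : ∀ x, 0 ≤ K x)
    (hKnorm : ∫ x, K x = 1) (hKsupp : Function.support K ⊆ Icc (-κ) κ) {t : ℝ}
    (ht : ∀ i, t ∉ Ioo (j i - ρ) (j i + ρ)) : convK K (stepOn j α) t = stepOn j α t := by
  refine convK_eq hKpos hKnorm (support_subset_ball_of_lt hKsupp hκρ)
    (measurable_stepOn j α).aestronglyMeasurable fun r hr => stepOn_congr fun i => ?_
  rcases le_or_gt t (j i - ρ) with hi | hi
  · exact iff_of_false (by linarith [hr.2]) (by linarith [hr.1, hr.2])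
  · have := not_lt.1 fun h => ht i ⟨hi, h⟩
    exact iff_of_true (by linarith [hr.1]) (by linarith [hr.1, hr.2])

end Transition

section Bracket

/-- `d` and `d'` are the first and the last point of `S` in the window `(s - ρ, s + ρ)`, both lying
in `[s - κ, s + κ]`. In a window without points of `S` the centre `s` takes their place. -/
structure IsJumpBracket (S : Set ℝ) (s κ ρ d d' : ℝ) : Prop where
  mem_left : d ∈ Icc (s - κ) (s + κ)
  mem_right : d' ∈ Icc (s - κ) (s + κ)
  le : d ≤ d'
  left_disjoint : Disjoint (Ioo (s - ρ) d) S
  right_disjoint : Disjoint (Ioo d' (s + ρ)) S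
  mem_or_disjoint : (d ∈ S ∧ d' ∈ S) ∨ (d = s ∧ d' = s ∧ Disjoint (Ioo (s - ρ) (s + ρ)) S)

variable {S : Set ℝ} {s κ ρ d d' : ℝ}

theorem exists_isJumpBracket (hS : S.Finite) (hκ : 0 ≤ κ) (hκρ : κ < ρ)
    (hSκ : ∀ t ∈ S, t ∈ Ioo (s - ρ) (s + ρ) → t ∈ Icc (s - κ) (s + κ)) :
    ∃ d d', IsJumpBracket S s κ ρ d d' := by
  have hfin := hS.inter_of_left (Ioo (s - ρ) (s + ρ))
  rcases (S ∩ Ioo (s - ρ) (s + ρ)).eq_empty_or_nonempty with hempty | hne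
  · have hdisj := (disjoint_iff_inter_eq_empty.2 hempty).symm
    have hs : s ∈ Icc (s - κ) (s + κ) := ⟨by linarith, by linarith⟩
    exact ⟨s, s, hs, hs, le_rfl, hdisj.mono_left (Ioo_subset_Ioo_right (by linarith)),
      hdisj.mono_left (Ioo_subset_Ioo_left (by linarith)), Or.inr ⟨rfl, rfl, hdisj⟩⟩
  · obtain ⟨d, ⟨hdS, hdW⟩, hd⟩ := hfin.exists_minimalFor id _ hne
    obtain ⟨d', ⟨hdS', hdW'⟩, hd'⟩ := hfin.exists_maximalFor id _ hne
    have hmin : ∀ t ∈ S, t ∈ Ioo (s - ρ) (s + ρ) → d ≤ t := fun t htS htW =>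
      (le_total d t).elim id fun h => hd ⟨htS, htW⟩ h
    have hmax : ∀ t ∈ S, t ∈ Ioo (s - ρ) (s + ρ) → t ≤ d' := fun t htS htW =>
      (le_total t d').elim id fun h => hd' ⟨htS, htW⟩ h
    exact ⟨d, d', hSκ d hdS hdW, hSκ d' hdS' hdW', hmin d' hdS' hdW',
      disjoint_left.2 fun t ht htS => ht.2.not_ge (hmin t htS ⟨ht.1, ht.2.trans hdW.2⟩),
      disjoint_left.2 fun t ht htS => ht.1.not_ge (hmax t htS ⟨hdW'.1.trans ht.1, ht.2⟩),
      Or.inl ⟨hdS, hdS'⟩⟩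

theorem IsJumpBracket.Icc_subset (h : IsJumpBracket S s κ ρ d d') :
    Icc d d' ⊆ Icc (s - κ) (s + κ) :=
  Icc_subset_Icc h.mem_left.1 h.mem_right.2

theorem IsJumpBracket.lt_left (h : IsJumpBracket S s κ ρ d d') (hκρ : κ < ρ) : s - ρ < d := by
  linarith [h.mem_left.1]

theorem IsJumpBracket.right_lt (h : IsJumpBracket S s κ ρ d d') (hκρ : κ < ρ) : d' < s + ρ := by
  linarith [h.mem_right.2]

theorem IsJumpBracket.eq_of_disjoint (h : IsJumpBracket S s κ ρ d d') (hκρ : κ < ρ)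
    (hdisj : Disjoint (Ioo (s - ρ) (s + ρ)) S) : d = s ∧ d' = s := by
  rcases h.mem_or_disjoint with ⟨hd, -⟩ | ⟨hd, hd', -⟩
  · exact absurd hd
      (disjoint_left.1 hdisj ⟨h.lt_left hκρ, h.le.trans_lt (h.right_lt hκρ)⟩)
  · exact ⟨hd, hd'⟩

theorem IsJumpBracket.mem_of_not_disjoint (h : IsJumpBracket S s κ ρ d d')
    (hdisj : ¬ Disjoint (Ioo (s - ρ) (s + ρ)) S) : d ∈ S ∧ d' ∈ S :=
  h.mem_or_disjoint.resolve_right fun h' => hdisj h'.2.2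

end Bracket

section ExtendConst

/-- The function equal to `u` on `[d, d']`, to `β` before and to `β'` after (for `d ≤ d'`). -/
def extendConst (d d' β β' : ℝ) (u : ℝ → ℝ) : ℝ → ℝ := fun t =>
  if t < d then β else if t ≤ d' then u t else β'

variable {f u : ℝ → ℝ} {s κ ρ d d' β β' c c' t : ℝ}

theorem extendConst_of_lt (h : t < d) : extendConst d d' β β' u t = β :=
  if_pos h

theorem extendConst_of_gt (hd : d ≤ d') (h : d' < t) : extendConst d d' β β' u t = β' := by
  rw [extendConst, if_neg (by linarith), if_neg (by linarith)]

theorem extendConst_of_mem (h : t ∈ Icc d d') : extendConst d d' β β' u t = u t := by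
  rw [extendConst, if_neg h.1.not_gt, if_pos h.2]

/-- The pointwise decrease of the error of approximating `f` when passing from `u` to `v`. -/
def errorDrop (f u v : ℝ → ℝ) : ℝ → ℝ := fun t => |u t - f t| - |v t - f t|

theorem neg_abs_sub_le_errorDrop_extendConst (hf : IsTransition f s κ ρ β β')
    (ht : t ∈ Ioo (s - ρ) (s + ρ)) (u : ℝ → ℝ) (d d' : ℝ) :
    -|β' - β| ≤ errorDrop f u (extendConst d d' β β' u) t := by
  have hu := abs_nonneg (u t - f t)
  have hβ := hf.abs_sub_left_le t ht
  have hβ' := hf.abs_sub_right_le t ht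
  rw [abs_sub_comm] at hβ hβ'
  unfold errorDrop extendConst
  split_ifs
  · linarith
  · linarith [abs_nonneg (β' - β)]
  · linarith

theorem neg_add_le_errorDrop_extendConst (hd : d ≤ d') (hc : t < d → u t = c)
    (hc' : d' < t → u t = c') :
    -(|c - β| + |c' - β'|) ≤ errorDrop f u (extendConst d d' β β' u) t := by
  have h0 := abs_nonneg (c - β)
  have h1 := abs_nonneg (c' - β')
  unfold errorDrop
  rcases lt_or_ge t d with h | h
  · rw [extendConst_of_lt h, hc h]
    linarith [abs_sub_le β c (f t), abs_sub_comm β c]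
  rcases le_or_gt t d' with h' | h'
  · rw [extendConst_of_mem ⟨h, h'⟩]
    linarith
  · rw [extendConst_of_gt hd h', hc' h']
    linarith [abs_sub_le β' c' (f t), abs_sub_comm β' c']

theorem mul_le_intervalIntegral_of_ae_Ioo {F : ℝ → ℝ} {a b A : ℝ} (hab : a ≤ b)
    (hF : IntervalIntegrable F volume a b) (hA : ∀ᵐ t, t ∈ Ioo a b → A ≤ F t) :
    A * (b - a) ≤ ∫ t in a..b, F t := by
  have hle : ∫ _ in a..b, A ≤ ∫ t in a..b, F t := by
    refine intervalIntegral.integral_mono_ae_restrict hab intervalIntegrable_const hF ?_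
    rwa [EventuallyLE, ← Measure.restrict_congr_set Ioo_ae_eq_Icc,
      ae_restrict_iff' measurableSet_Ioo]
  rwa [intervalIntegral.integral_const, smul_eq_mul, mul_comm] at hle

theorem IsJumpBracket.le_intervalIntegral_errorDrop {S : Set ℝ} {B : ℝ}
    (h : IsJumpBracket S s κ ρ d d') (hκ : 0 ≤ κ) (hκρ : κ < ρ) (hf : IsTransition f s κ ρ β β')
    (hc : ∀ᵐ t, t ∈ Ioo (s - ρ) d → u t = c) (hc' : ∀ᵐ t, t ∈ Ioo d' (s + ρ) → u t = c')
    (hint : IntervalIntegrable (errorDrop f u (extendConst d d' β β' u)) volume (s - ρ) (s + ρ))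
    (hB : ∀ᵐ t, t ∈ Ioo (s - κ) (s + κ) → B ≤ errorDrop f u (extendConst d d' β β' u) t) :
    (|c - β| + |c' - β'|) * (ρ - κ) + B * (2 * κ) ≤
      ∫ t in (s - ρ)..(s + ρ), errorDrop f u (extendConst d d' β β' u) t := by
  have hint' : ∀ {x y}, s - ρ ≤ x → x ≤ y → y ≤ s + ρ →
      IntervalIntegrable (errorDrop f u (extendConst d d' β β' u)) volume x y :=
    fun hx hxy hy => hint.mono_set (by
      rw [uIcc_of_le hxy, uIcc_of_le (hx.trans (hxy.trans hy))]
      exact Icc_subset_Icc hx hy)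
  have hleft : ∀ᵐ t, t ∈ Ioo (s - ρ) (s - κ) →
      |c - β| ≤ errorDrop f u (extendConst d d' β β' u) t := by
    filter_upwards [hc] with t ht htI
    have htd := htI.2.trans_le h.mem_left.1
    rw [errorDrop, ht ⟨htI.1, htd⟩, extendConst_of_lt htd, hf.eq_left t htI]
    simp
  have hright : ∀ᵐ t, t ∈ Ioo (s + κ) (s + ρ) →
      |c' - β'| ≤ errorDrop f u (extendConst d d' β β' u) t := by
    filter_upwards [hc'] with t ht htI
    have htd' := h.mem_right.2.trans_lt htI.1
    rw [errorDrop, ht ⟨htd', htI.2⟩, extendConst_of_gt h.le htd', hf.eq_right t htI]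
    simp
  have h₁ := hint' (x := s - ρ) (y := s - κ) le_rfl (by linarith) (by linarith)
  have h₂ := hint' (x := s - κ) (y := s + κ) (by linarith) (by linarith) (by linarith)
  have h₃ := hint' (x := s + κ) (y := s + ρ) (by linarith) (by linarith) le_rfl
  rw [← intervalIntegral.integral_add_adjacent_intervals (h₁.trans h₂) h₃,
    ← intervalIntegral.integral_add_adjacent_intervals h₁ h₂]
  linarith [mul_le_intervalIntegral_of_ae_Ioo (by linarith) h₁ hleft,
    mul_le_intervalIntegral_of_ae_Ioo (by linarith) h₂ hB,
    mul_le_intervalIntegral_of_ae_Ioo (by linarith) h₃ hright]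

theorem IsJumpBracket.exists_ae_eq_left (h : IsJumpBracket (jumpSet u) s κ ρ d d') (hκρ : κ < ρ)
    (h01 : Ioo (s - ρ) (s + ρ) ⊆ Ioo 0 1) : ∃ c, ∀ᵐ t, t ∈ Ioo (s - ρ) d → u t = c :=
  exists_ae_eq_const_of_disjoint_jumpSet (h.lt_left hκρ)
    ((Ioo_subset_Ioo_right (h.le.trans (h.right_lt hκρ).le)).trans h01) h.left_disjoint

theorem IsJumpBracket.exists_ae_eq_right (h : IsJumpBracket (jumpSet u) s κ ρ d d') (hκρ : κ < ρ)
    (h01 : Ioo (s - ρ) (s + ρ) ⊆ Ioo 0 1) : ∃ c, ∀ᵐ t, t ∈ Ioo d' (s + ρ) → u t = c :=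
  exists_ae_eq_const_of_disjoint_jumpSet (h.right_lt hκρ)
    ((Ioo_subset_Ioo_left ((h.lt_left hκρ).le.trans h.le)).trans h01) h.right_disjoint

theorem IsJumpBracket.intervalIntegral_errorDrop_nonneg
    (h : IsJumpBracket (jumpSet u) s κ ρ d d') (hκ : 0 ≤ κ) (hκρ : 3 * κ < ρ)
    (h01 : Ioo (s - ρ) (s + ρ) ⊆ Ioo 0 1) (hf : IsTransition f s κ ρ β β')
    (hint : IntervalIntegrable (errorDrop f u (extendConst d d' β β' u)) volume (s - ρ) (s + ρ)) :
    0 ≤ ∫ t in (s - ρ)..(s + ρ), errorDrop f u (extendConst d d' β β' u) t := by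
  have hκρ' : κ < ρ := by linarith
  obtain ⟨c, hc⟩ := h.exists_ae_eq_left hκρ' h01
  obtain ⟨c', hc'⟩ := h.exists_ae_eq_right hκρ' h01
  have hloss : ∀ᵐ t, t ∈ Ioo (s - κ) (s + κ) →
      -(|c - β| + |c' - β'|) ≤ errorDrop f u (extendConst d d' β β' u) t := by
    filter_upwards [hc, hc'] with t ht ht' htI
    exact neg_add_le_errorDrop_extendConst h.le (fun hd => ht ⟨by linarith [htI.1], hd⟩)
      fun hd' => ht' ⟨hd', by linarith [htI.2]⟩
  calc (0 : ℝ) ≤ (|c - β| + |c' - β'|) * (ρ - 3 * κ) :=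
        mul_nonneg (by positivity) (by linarith)
    _ = (|c - β| + |c' - β'|) * (ρ - κ) + -(|c - β| + |c' - β'|) * (2 * κ) := by ring
    _ ≤ _ := h.le_intervalIntegral_errorDrop hκ hκρ' hf hc hc' hint hloss

theorem IsJumpBracket.mul_le_intervalIntegral_errorDrop
    (h : IsJumpBracket (jumpSet u) s κ ρ d d') (hκ : 0 ≤ κ) (hκρ : κ < ρ)
    (h01 : Ioo (s - ρ) (s + ρ) ⊆ Ioo 0 1) (hf : IsTransition f s κ ρ β β')
    (hint : IntervalIntegrable (errorDrop f u (extendConst d d' β β' u)) volume (s - ρ) (s + ρ))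
    (hdisj : Disjoint (Ioo (s - ρ) (s + ρ)) (jumpSet u)) :
    |β' - β| * (ρ - 3 * κ) ≤
      ∫ t in (s - ρ)..(s + ρ), errorDrop f u (extendConst d d' β β' u) t := by
  obtain ⟨c, hc⟩ := exists_ae_eq_const_of_disjoint_jumpSet (by linarith) h01 hdisj
  have hcl : ∀ᵐ t, t ∈ Ioo (s - ρ) d → u t = c := by
    filter_upwards [hc] with t ht htI
    exact ht ⟨htI.1, htI.2.trans (h.le.trans_lt (h.right_lt hκρ))⟩
  have hcr : ∀ᵐ t, t ∈ Ioo d' (s + ρ) → u t = c := by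
    filter_upwards [hc] with t ht htI
    exact ht ⟨((h.lt_left hκρ).trans_le h.le).trans htI.1, htI.2⟩
  have htri : |β' - β| ≤ |c - β| + |c - β'| := by
    linarith [abs_sub_le β' c β, abs_sub_comm β' c]
  calc |β' - β| * (ρ - 3 * κ) = |β' - β| * (ρ - κ) + -|β' - β| * (2 * κ) := by ring
    _ ≤ (|c - β| + |c - β'|) * (ρ - κ) + -|β' - β| * (2 * κ) := by
        gcongr
    _ ≤ _ := h.le_intervalIntegral_errorDrop hκ hκρ hf hcl hcr hint <|
        Eventually.of_forall fun t ht => neg_abs_sub_le_errorDrop_extendConst hf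
          ⟨by linarith [ht.1], by linarith [ht.2]⟩ u d d'

end ExtendConst

section Splice

/-- The function equal to `u` on each `[d i, d' i]` and to the step function with jump locations `d`
and values `α` elsewhere. -/
def splice {n : ℕ} (d d' : Fin n → ℝ) (α : Fin (n + 1) → ℝ) (u : ℝ → ℝ) : ℝ → ℝ := fun t =>
  if ∃ i, t ∈ Icc (d i) (d' i) then u t else stepOn d α t

/-- The indices of the windows `(j k - ρ, j k + ρ)` containing no jump of `u`. -/
def missedWindows {n : ℕ} (j : Fin n → ℝ) (ρ : ℝ) (u : ℝ → ℝ) : Finset (Fin n) :=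
  Finset.univ.filter fun k => Disjoint (Ioo (j k - ρ) (j k + ρ)) (jumpSet u)

variable {n : ℕ} {j d d' : Fin n → ℝ} {α : Fin (n + 1) → ℝ} {u : ℝ → ℝ} {κ ρ t : ℝ}

theorem splice_of_forall_notMem (h : ∀ i, t ∉ Icc (d i) (d' i)) :
    splice d d' α u t = stepOn d α t :=
  if_neg (not_exists.2 h)

theorem eventually_stepOn_eq (hd : t ∉ range d) : ∀ᶠ s in 𝓝 t, stepOn d α s = stepOn d α t := by
  have hlt : ∀ i, ∀ᶠ s in 𝓝 t, (d i < s ↔ d i < t) := fun i => by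
    rcases lt_or_gt_of_ne fun hi : d i = t => hd ⟨i, hi⟩ with hi | hi
    · filter_upwards [lt_mem_nhds hi] with s hs using iff_of_true hs hi
    · filter_upwards [gt_mem_nhds hi] with s hs using iff_of_false hs.not_gt hi.not_gt
  filter_upwards [eventually_all.2 hlt] with s hs using stepOn_congr hs

theorem jumpSet_splice_subset (d d' : Fin n → ℝ) (α : Fin (n + 1) → ℝ) (u : ℝ → ℝ) :
    jumpSet (splice d d' α u) ⊆ jumpSet u ∪ (range d ∪ range d') := by
  rintro t ⟨ht, hjump⟩
  by_contra! hn
  obtain ⟨hu, hd, hd'⟩ : t ∉ jumpSet u ∧ t ∉ range d ∧ t ∉ range d' := by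
    simpa only [mem_union, not_or] using hn
  refine hjump ?_
  by_cases h : ∃ i, t ∈ Icc (d i) (d' i)
  · obtain ⟨i, hi⟩ := h
    have hmem : t ∈ Ioo (d i) (d' i) :=
      ⟨hi.1.lt_of_ne fun e => hd ⟨i, e⟩, hi.2.lt_of_ne fun e => hd' ⟨i, e.symm⟩⟩
    refine (eventuallyConst_of_notMem_jumpSet ht hu).congr (EventuallyEq.filter_mono ?_ inf_le_left)
    filter_upwards [isOpen_Ioo.mem_nhds hmem] with s hs
    exact (if_pos ⟨i, Ioo_subset_Icc_self hs⟩).symm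
  · have hnear : ∀ᶠ s in 𝓝 t, ∀ i, s ∉ Icc (d i) (d' i) :=
      eventually_all.2 fun i => isClosed_Icc.isOpen_compl.mem_nhds fun hi => h ⟨i, hi⟩
    refine eventuallyConst_iff_exists_eventuallyEq.2
      ⟨stepOn d α t, EventuallyEq.filter_mono ?_ inf_le_left⟩
    filter_upwards [hnear, eventually_stepOn_eq hd] with s hs hst
    rw [splice_of_forall_notMem hs, hst]

theorem IsPC.splice (hu : IsPC u) (d d' : Fin n → ℝ) (α : Fin (n + 1) → ℝ) :
    IsPC (splice d d' α u) :=
  isPC_iff_finite_jumpSet.2 <|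
    (hu.finite_jumpSet.union ((finite_range d).union (finite_range d'))).subset
      (jumpSet_splice_subset d d' α u)

section Window

variable {S : Set ℝ}

theorem splice_eq_stepOn (hκρ : κ < ρ) (hb : ∀ i, IsJumpBracket S (j i) κ ρ (d i) (d' i))
    (ht : ∀ i, t ∉ Ioo (j i - ρ) (j i + ρ)) : splice d d' α u t = stepOn j α t := by
  rw [splice_of_forall_notMem fun i hi => ht i
    ⟨((hb i).lt_left hκρ).trans_le hi.1, hi.2.trans_lt ((hb i).right_lt hκρ)⟩]
  refine stepOn_congr fun i => ?_
  have hlo := (hb i).lt_left hκρ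
  have hhi := (hb i).le.trans_lt ((hb i).right_lt hκρ)
  rcases le_or_gt t (j i - ρ) with hi | hi
  · exact iff_of_false (by linarith) (by linarith)
  · have := not_lt.1 fun h => ht i ⟨hi, h⟩
    exact iff_of_true (by linarith) (by linarith)

theorem IsSeparated.splice_eq_extendConst (hj : IsSeparated j ρ) (hκρ : κ < ρ)
    (hb : ∀ i, IsJumpBracket S (j i) κ ρ (d i) (d' i)) {k : Fin n}
    (ht : t ∈ Ioo (j k - ρ) (j k + ρ)) :
    splice d d' α u t = extendConst (d k) (d' k) (α k.castSucc) (α k.succ) u t := by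
  by_cases hmem : t ∈ Icc (d k) (d' k)
  · rw [extendConst_of_mem hmem]
    exact if_pos ⟨k, hmem⟩
  have hnot : ∀ i, t ∉ Icc (d i) (d' i) := fun i hi => hmem <| by
    rwa [← hj.eq_of_mem
      ⟨((hb i).lt_left hκρ).trans_le hi.1, hi.2.trans_lt ((hb i).right_lt hκρ)⟩ ht]
  have hlo : ∀ i < k, d i < t := fun i hi => by
    linarith [(hb i).le, (hb i).right_lt hκρ, hj.add_le_sub hi, ht.1]
  have hhi : ∀ i, k < i → t ≤ d i := fun i hi => by
    linarith [(hb i).lt_left hκρ, hj.add_le_sub hi, ht.2]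
  rw [splice_of_forall_notMem hnot, stepOn_eq_ite hlo hhi]
  rcases lt_or_ge t (d k) with h | h
  · rw [if_pos h.le, extendConst_of_lt h]
  · have h' : d' k < t := not_le.1 fun h' => hmem ⟨h, h'⟩
    rw [if_neg ((hb k).le.trans_lt h').not_ge, extendConst_of_gt (hb k).le h']

end Window

theorem jumpSet_splice_subset_union_image (hκρ : κ < ρ)
    (hb : ∀ i, IsJumpBracket (jumpSet u) (j i) κ ρ (d i) (d' i)) :
    jumpSet (splice d d' α u) ⊆ jumpSet u ∪ j '' missedWindows j ρ u := by
  have hmem : ∀ k, d k ∈ jumpSet u ∪ j '' missedWindows j ρ u ∧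
      d' k ∈ jumpSet u ∪ j '' missedWindows j ρ u := by
    intro k
    by_cases hk : Disjoint (Ioo (j k - ρ) (j k + ρ)) (jumpSet u)
    · obtain ⟨hd, hd'⟩ := (hb k).eq_of_disjoint hκρ hk
      have hkM : j k ∈ j '' missedWindows j ρ u := ⟨k, by simp [missedWindows, hk], rfl⟩
      exact ⟨Or.inr (hd ▸ hkM), Or.inr (hd' ▸ hkM)⟩
    · exact ((hb k).mem_of_not_disjoint hk).imp Or.inl Or.inl
  refine (jumpSet_splice_subset d d' α u).trans (union_subset subset_union_left ?_)
  exact union_subset (range_subset_iff.2 fun k => (hmem k).1)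
    (range_subset_iff.2 fun k => (hmem k).2)

theorem jumps_splice_le (hu : IsPC u) (hκρ : κ < ρ)
    (hb : ∀ i, IsJumpBracket (jumpSet u) (j i) κ ρ (d i) (d' i)) :
    jumps (splice d d' α u) ≤ jumps u + (missedWindows j ρ u).card := by
  rw [(hu.splice d d' α).jumps_eq_ncard_jumpSet, hu.jumps_eq_ncard_jumpSet]
  calc (jumpSet (splice d d' α u)).ncard
      ≤ (jumpSet u ∪ j '' missedWindows j ρ u).ncard :=
        ncard_le_ncard (jumpSet_splice_subset_union_image hκρ hb)
          (hu.finite_jumpSet.union ((missedWindows j ρ u).finite_toSet.image j))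
    _ ≤ (jumpSet u).ncard + (j '' missedWindows j ρ u).ncard := ncard_union_le _ _
    _ ≤ (jumpSet u).ncard + (missedWindows j ρ u).card := by
        gcongr
        exact (ncard_image_le (Finset.finite_toSet _)).trans_eq (ncard_coe_finset _)

theorem exists_mem_jumpSet_splice (hj : IsSeparated j ρ) (hκρ : κ < ρ)
    (hb : ∀ i, IsJumpBracket (jumpSet u) (j i) κ ρ (d i) (d' i)) {k : Fin n}
    (hα : α k.castSucc ≠ α k.succ) :
    ∃ t ∈ jumpSet (splice d d' α u), t ∈ Icc (j k - κ) (j k + κ) := by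
  have hlo := (hb k).lt_left hκρ
  have hhi := (hb k).right_lt hκρ
  have hleft : ∀ t ∈ Ioo (j k - ρ) (d k), splice d d' α u t = α k.castSucc := fun t ht => by
    rw [hj.splice_eq_extendConst hκρ hb ⟨ht.1, ht.2.trans ((hb k).le.trans_lt hhi)⟩,
      extendConst_of_lt ht.2]
  have hright : ∀ t ∈ Ioo (d' k) (j k + ρ), splice d d' α u t = α k.succ := fun t ht => by
    rw [hj.splice_eq_extendConst hκρ hb ⟨(hlo.trans_le (hb k).le).trans ht.1, ht.2⟩,
      extendConst_of_gt (hb k).le ht.1]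
  obtain ⟨t, ht, htk⟩ := exists_mem_jumpSet_of_ne hlo (hb k).le hhi (hj.Ioo_subset k)
    (Eventually.of_forall hleft) (Eventually.of_forall hright) hα
  exact ⟨t, ht, (hb k).Icc_subset htk⟩

end Splice

section Comparison

theorem sum_setIntegral_le_integral {X ι : Type*} [MeasurableSpace X] {μ : Measure X} [Fintype ι]
    {W : ι → Set X} {F : X → ℝ} (hW : ∀ i, MeasurableSet (W i))
    (hdisj : Pairwise (Function.onFun Disjoint W)) (hF : Integrable F μ)
    (hnonneg : ∀ x, (∀ i, x ∉ W i) → 0 ≤ F x) : ∑ i, ∫ x in W i, F x ∂μ ≤ ∫ x, F x ∂μ := by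
  have hU : MeasurableSet (⋃ i, W i) := MeasurableSet.iUnion hW
  rw [← integral_iUnion_fintype hW hdisj fun i => hF.integrableOn, ← integral_add_compl hU hF]
  refine le_add_of_nonneg_right (setIntegral_nonneg hU.compl fun x hx => hnonneg x ?_)
  simpa only [mem_compl_iff, mem_iUnion, not_exists] using hx

variable {n : ℕ} {j d d' : Fin n → ℝ} {α : Fin (n + 1) → ℝ} {f u v F : ℝ → ℝ} {κ ρ γ : ℝ}

theorem intervalIntegrable_of_integrable_mu01 {a b : ℝ} (hF : Integrable F mu01) (hab : a ≤ b)
    (h01 : Ioc a b ⊆ Icc 0 1) : IntervalIntegrable F volume a b :=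
  (intervalIntegrable_iff_integrableOn_Ioc_of_le hab).2 (IntegrableOn.mono_set hF h01)

theorem IsSeparated.sum_intervalIntegral_le (hj : IsSeparated j ρ) (hρ : 0 ≤ ρ)
    (hF : Integrable F mu01) (hnonneg : ∀ t, (∀ i, t ∉ Ioo (j i - ρ) (j i + ρ)) → 0 ≤ F t) :
    ∑ k, ∫ t in (j k - ρ)..(j k + ρ), F t ≤ ∫ t, F t ∂mu01 := by
  have hwindow : ∀ k, ∫ t in (j k - ρ)..(j k + ρ), F t =
      ∫ t in Ioc (j k - ρ) (j k + ρ), F t ∂mu01 := fun k => by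
    rw [mu01, Measure.restrict_restrict_of_subset (hj.Ioc_subset k),
      intervalIntegral.integral_of_le (by linarith)]
  simp only [hwindow]
  exact sum_setIntegral_le_integral (fun _ => measurableSet_Ioc) hj.pairwise_disjoint hF
    fun t ht => hnonneg t fun i hi => ht i (Ioo_subset_Ioc_self hi)

/-- `f` is the step function with jump locations `j` and values `α` off the windows
`(j k - ρ, j k + ρ)`, with its jumps smeared over `[j k - κ, j k + κ]`. -/
structure IsBlurredStep (f : ℝ → ℝ) (j : Fin n → ℝ) (α : Fin (n + 1) → ℝ) (κ ρ : ℝ) : Prop where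
  isTransition : ∀ k, IsTransition f (j k) κ ρ (α k.castSucc) (α k.succ)
  eq_stepOn : ∀ t, (∀ i, t ∉ Ioo (j i - ρ) (j i + ρ)) → f t = stepOn j α t

theorem IsSeparated.isBlurredStep_convK {K : ℝ → ℝ} (hj : IsSeparated j ρ)
    (α : Fin (n + 1) → ℝ) (hκρ : κ < ρ) (hKpos : ∀ x, 0 ≤ K x) (hKnorm : ∫ x, K x = 1)
    (hKsupp : Function.support K ⊆ Icc (-κ) κ) : IsBlurredStep (convK K (stepOn j α)) j α κ ρ where
  isTransition := hj.isTransition_convK α hκρ hKpos hKnorm hKsupp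
  eq_stepOn _ := convK_stepOn_eq_stepOn hκρ hKpos hKnorm hKsupp

theorem integrable_errorDrop (hf : Integrable f mu01) (hu : Integrable u mu01)
    (hv : Integrable v mu01) : Integrable (errorDrop f u v) mu01 :=
  (hu.sub hf).abs.sub (hv.sub hf).abs

theorem integral_errorDrop (hf : Integrable f mu01) (hu : Integrable u mu01)
    (hv : Integrable v mu01) : ∫ t, errorDrop f u v t ∂mu01 = L1dist u f - L1dist v f :=
  integral_sub (hu.sub hf).abs (hv.sub hf).abs

theorem IsBlurredStep.ite_le_intervalIntegral_errorDrop (hf : IsBlurredStep f j α κ ρ)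
    (hj : IsSeparated j ρ) (hκ : 0 ≤ κ) (hκρ : 3 * κ < ρ)
    (hb : ∀ i, IsJumpBracket (jumpSet u) (j i) κ ρ (d i) (d' i))
    (hint : Integrable (errorDrop f u (splice d d' α u)) mu01) {k : Fin n}
    (hγ : γ ≤ |α k.succ - α k.castSucc| * (ρ - 3 * κ)) :
    (if k ∈ missedWindows j ρ u then γ else 0) ≤
      ∫ t in (j k - ρ)..(j k + ρ), errorDrop f u (splice d d' α u) t := by
  have hκρ' : κ < ρ := by linarith
  have hle : j k - ρ ≤ j k + ρ := by linarith
  have hcongr : EqOn (errorDrop f u (splice d d' α u))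
      (errorDrop f u (extendConst (d k) (d' k) (α k.castSucc) (α k.succ) u))
      (Ioo (j k - ρ) (j k + ρ)) := fun t ht => by
    rw [errorDrop, errorDrop, hj.splice_eq_extendConst hκρ' hb ht]
  have hintk := intervalIntegrable_of_integrable_mu01 hint hle (hj.Ioc_subset k)
  have hint' := hintk.congr_uIoo (uIoo_of_le hle ▸ hcongr)
  rw [intervalIntegral.integral_congr_Ioo_of_le hle hcongr]
  split_ifs with hk
  · exact hγ.trans ((hb k).mul_le_intervalIntegral_errorDrop hκ hκρ' (hj.Ioo_subset k)
      (hf.isTransition k) hint' (by simpa [missedWindows] using hk))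
  · exact (hb k).intervalIntegral_errorDrop_nonneg hκ hκρ (hj.Ioo_subset k) (hf.isTransition k)
      hint'

theorem IsBlurredStep.mul_card_missedWindows_le (hf : IsBlurredStep f j α κ ρ)
    (hfint : Integrable f mu01) (hj : IsSeparated j ρ) (hκ : 0 ≤ κ) (hκρ : 3 * κ < ρ)
    (hu : IsPC u) (hb : ∀ i, IsJumpBracket (jumpSet u) (j i) κ ρ (d i) (d' i))
    (hγ : ∀ k : Fin n, γ ≤ |α k.succ - α k.castSucc| * (ρ - 3 * κ)) :
    γ * (missedWindows j ρ u).card ≤ L1dist u f - L1dist (splice d d' α u) f := by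
  have hv := (hu.splice d d' α).integrable_s14
  have hint := integrable_errorDrop hfint hu.integrable_s14 hv
  calc γ * (missedWindows j ρ u).card = ∑ k, if k ∈ missedWindows j ρ u then γ else 0 := by
        rw [Finset.sum_ite_mem, Finset.univ_inter, Finset.sum_const, nsmul_eq_mul, mul_comm]
    _ ≤ ∑ k, ∫ t in (j k - ρ)..(j k + ρ), errorDrop f u (splice d d' α u) t :=
        Finset.sum_le_sum fun k _ =>
          hf.ite_le_intervalIntegral_errorDrop hj hκ hκρ hb hint (hγ k)
    _ ≤ ∫ t, errorDrop f u (splice d d' α u) t ∂mu01 := by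
        refine hj.sum_intervalIntegral_le (by linarith) hint fun t ht => ?_
        rw [errorDrop, hf.eq_stepOn t ht, splice_eq_stepOn (by linarith) hb ht, sub_self, abs_zero,
          sub_zero]
        exact abs_nonneg _
    _ = L1dist u f - L1dist (splice d d' α u) f := integral_errorDrop hfint hu.integrable_s14 hv

theorem IsBlurredStep.PottsVal_splice_le (hf : IsBlurredStep f j α κ ρ)
    (hfint : Integrable f mu01) (hj : IsSeparated j ρ) (hκ : 0 ≤ κ) (hκρ : 3 * κ < ρ)
    (hu : IsPC u) (hb : ∀ i, IsJumpBracket (jumpSet u) (j i) κ ρ (d i) (d' i)) (hγ0 : 0 ≤ γ)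
    (hγ : ∀ k : Fin n, γ ≤ |α k.succ - α k.castSucc| * (ρ - 3 * κ)) :
    PottsVal γ f (splice d d' α u) ≤ PottsVal γ f u := by
  have herror := hf.mul_card_missedWindows_le hfint hj hκ hκρ hu hb hγ
  have hjumps : (jumps (splice d d' α u) : ℝ) ≤ jumps u + (missedWindows j ρ u).card := by
    exact_mod_cast jumps_splice_le hu (by linarith) hb
  unfold PottsVal
  linarith [mul_le_mul_of_nonneg_left hjumps hγ0]

end Comparison

section Deconvolution

theorem IsPCIn.isPC {u : ℝ → ℝ} {S : Set ℝ} (hu : IsPCIn u S) : IsPC u := by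
  obtain ⟨m, x, a, h, -⟩ := hu
  exact ⟨m, x, a, h⟩

theorem IsPCIn.jumpSet_subset {u : ℝ → ℝ} {S : Set ℝ} (hu : IsPCIn u S) : jumpSet u ⊆ S := by
  obtain ⟨m, x, a, h, hx⟩ := hu
  intro t ht
  obtain ⟨i, hi0, hi1, rfl⟩ := h.exists_of_mem_jumpSet ht
  exact hx i hi0 hi1

theorem IsSeparated.exists_forall_isJumpBracket {n : ℕ} {j : Fin n → ℝ} {κ ρ : ℝ} {S : Set ℝ}
    (hj : IsSeparated j ρ) (hκ : 0 ≤ κ) (hκρ : κ < ρ) (hS : S.Finite)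
    (hSκ : S ⊆ ⋃ i, Icc (j i - κ) (j i + κ)) :
    ∃ d d' : Fin n → ℝ, ∀ i, IsJumpBracket S (j i) κ ρ (d i) (d' i) := by
  have hloc : ∀ k, ∀ t ∈ S, t ∈ Ioo (j k - ρ) (j k + ρ) → t ∈ Icc (j k - κ) (j k + κ) := by
    intro k t htS htk
    obtain ⟨i, hi⟩ := mem_iUnion.1 (hSκ htS)
    exact hj.eq_of_mem (Icc_subset_Ioo (by linarith) (by linarith) hi) htk ▸ hi
  choose d d' hb using fun k => exists_isJumpBracket hS hκ hκρ (hloc k)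
  exact ⟨d, d', hb⟩

theorem le_abs_sub_mul_of_hjumpMin_hjumpMax {n : ℕ} {α : Fin (n + 2) → ℝ} {κ γ l : ℝ} (hκ : 0 ≤ κ)
    (hl : 2 * κ ≤ l) (h : 6 * hjumpMax α * κ ≤ (1 / 2) * hjumpMin α * (l - 2 * κ) - γ)
    (k : Fin (n + 1)) : γ ≤ |α k.succ - α k.castSucc| * (l / 2 - 3 * κ) := by
  have hmin : hjumpMin α ≤ |α k.succ - α k.castSucc| := Finset.inf'_le _ (Finset.mem_univ k)
  have hmax : |α k.succ - α k.castSucc| ≤ hjumpMax α :=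
    Finset.le_sup' (fun i : Fin (n + 1) => |α i.succ - α i.castSucc|) (Finset.mem_univ k)
  have hminl := mul_le_mul_of_nonneg_right hmin (sub_nonneg.2 hl)
  have hmaxκ := mul_le_mul_of_nonneg_right hmax hκ
  have hnonneg := mul_nonneg (abs_nonneg (α k.succ - α k.castSucc)) hκ
  linarith

end Deconvolution

theorem statement_14_general
    (n : ℕ) (j : Fin (n + 1) → ℝ) (α : Fin (n + 2) → ℝ)
    (K : ℝ → ℝ) (κ : ℝ) (hκ : 0 ≤ κ)
    (hKpos : ∀ x, 0 ≤ K x) (hKnorm : (∫ x, K x) = 1)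
    (hKsupp : Function.support K ⊆ Set.Icc (-κ) κ)
    (γ : ℝ) (hγ : 0 < γ)
    (hcond : ∀ k : Fin (n + 1), γ ≤ |α k.succ - α k.castSucc| * (lmin j / 2 - 3 * κ))
    (u₁ : ℝ → ℝ)
    (hu₁ : IsPCIn u₁ (⋃ i : Fin (n + 1), Set.Icc (j i - κ) (j i + κ))) :
    ∃ u₂ : ℝ → ℝ, IsPC u₂ ∧
      PottsVal γ (convK K (stepOn j α)) u₂ ≤ PottsVal γ (convK K (stepOn j α)) u₁ ∧
      ∃ (m : ℕ) (x : Fin (m + 2) → ℝ) (a : Fin (m + 1) → ℝ),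
        IsPCRep u₂ x a ∧ (∀ ii : Fin m, a ii.castSucc ≠ a ii.succ) ∧
        ∀ i : Fin (n + 1), ∃ lidx : Fin (m + 2),
          lidx ≠ 0 ∧ lidx ≠ Fin.last (m + 1) ∧ x lidx ∈ Set.Icc (j i - κ) (j i + κ) := by
  have hprod := fun k => hγ.trans_le (hcond k)
  have hκρ : 3 * κ < lmin j / 2 := sub_pos.1 (pos_of_mul_pos_right (hprod 0) (abs_nonneg _))
  have hκρ' : κ < lmin j / 2 := by linarith
  have hα : ∀ k : Fin (n + 1), α k.castSucc ≠ α k.succ := fun k hk => by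
    simpa [hk] using hprod k
  have hj : IsSeparated j (lmin j / 2) := isSeparated_lmin_div_two (by linarith)
  have hf := hj.isBlurredStep_convK α hκρ' hKpos hKnorm hKsupp
  have hfint := integrable_convK_stepOn j α hKpos hKnorm (support_subset_ball_of_lt hKsupp hκρ')
  obtain ⟨d, d', hb⟩ := hj.exists_forall_isJumpBracket hκ hκρ' hu₁.isPC.finite_jumpSet
    hu₁.jumpSet_subset
  have hu₂ := hu₁.isPC.splice d d' α
  refine ⟨splice d d' α u₁, hu₂, hf.PottsVal_splice_le hfint hj hκ hκρ hu₁.isPC hb hγ.le hcond, ?_⟩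
  obtain ⟨m, x, a, hrep, hne, hx⟩ := hu₂.exists_reduced_rep
  refine ⟨m, x, a, hrep, hne, fun k => ?_⟩
  obtain ⟨t, ht, htk⟩ := exists_mem_jumpSet_splice hj hκρ' hb (hα k)
  obtain ⟨i, hi0, hi1, rfl⟩ := hx t ht
  exact ⟨i, hi0, hi1, htk⟩

theorem statement_14
    (n : ℕ) (j : Fin (n + 1) → ℝ) (α : Fin (n + 2) → ℝ)
    (hj : StrictMono j) (hj0 : 0 < j 0) (hj1 : j (Fin.last n) < 1)
    (hadj : ∀ i : Fin (n + 1), α i.castSucc ≠ α i.succ)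
    (K : ℝ → ℝ) (κ : ℝ) (hκ : 0 < κ)
    (hKint : Integrable K) (hKpos : ∀ x, 0 ≤ K x)
    (hKsym : ∀ x, K (-x) = K x) (hKnorm : (∫ x, K x) = 1)
    (hKsupp : Function.support K ⊆ Set.Icc (-κ) κ)
    (hκl : κ ≤ lmin j / 6)
    (γ : ℝ) (hγ : 0 < γ)
    (hcond : 6 * hjumpMax α * κ ≤ (1 / 2) * hjumpMin α * (lmin j - 2 * κ) - γ)
    (u₁ : ℝ → ℝ)
    -- `u₁` is piecewise constant with no jump in `∪ᵢ Nᵢ`, i.e. all its jump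
    -- locations lie in `∪ᵢ Jᵢ`
    (hu₁ : IsPCIn u₁ (⋃ i : Fin (n + 1), Set.Icc (j i - κ) (j i + κ))) :
    ∃ u₂ : ℝ → ℝ, IsPC u₂ ∧
      PottsVal γ (convK K (stepOn j α)) u₂ ≤ PottsVal γ (convK K (stepOn j α)) u₁ ∧
      -- `u₂` has at least one jump in each `Jᵢ`: it has a minimal (adjacent values
      -- distinct) representation with an interior partition point in each `Jᵢ`
      ∃ (m : ℕ) (x : Fin (m + 2) → ℝ) (a : Fin (m + 1) → ℝ),
        IsPCRep u₂ x a ∧ (∀ ii : Fin m, a ii.castSucc ≠ a ii.succ) ∧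
        ∀ i : Fin (n + 1), ∃ lidx : Fin (m + 2),
          lidx ≠ 0 ∧ lidx ≠ Fin.last (m + 1) ∧ x lidx ∈ Set.Icc (j i - κ) (j i + κ) :=
  statement_14_general n j α K κ hκ.le hKpos hKnorm hKsupp γ hγ
    (le_abs_sub_mul_of_hjumpMin_hjumpMax hκ.le (by linarith) hcond) u₁ hu₁
end
end
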